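/- (Feasible Bellman equation, necessary and sufficient) Assume 𝒳 and 𝒰 are finite and nonempty and the maximum feasible region X* is nonempty. A function V : X* → ℝ satisfies the feasible Bellman equation V(x) = max_{u ∈ U*(x)} [ r(x, u) + γ·V(f(x, u)) ] for all x ∈ X* if and only if V equals the optimal state-value function V*. -/

import Mathlib

/-!
A policy lies in `Π*` exactly when it keeps the maximum feasible region `X*` invariant
(`Xfeas_eq_Xstar_iff`), so the problem restricted to `X*` is an ordinary discounted control problem
with action sets `U*(x)`, nonempty by `exists_step_mem_Xstar`.

Any solution `V` of the feasible Bellman equation equals `V*` (`eq_Vstar_of_bellman`): unrolling the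
equation along a trajectory gives `V^π ≤ V` for all `π ∈ Π*`, and equality holds for a policy that
is greedy for `V`. Conversely, the Bellman operator is a sup-norm contraction, so it has a
fixed point (`exists_bellman`); by the first part this fixed point is `V*`, which therefore solves
the equation.
-/

open scoped Classical

variable {X U : Type*}

/-- Trajectory from `x` under policy `π`: `x₀ = x`, `x_{t+1} = f xₜ (π xₜ)`. -/
def traj (f : X → U → X) (π : X → U) (x : X) : ℕ → X
  | 0 => x
  | t + 1 => f (traj f π x t) (π (traj f π x t))

/-- Constraint indicator: `c(x) = 1` if `h x > 0`, else `0`. -/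
noncomputable def cInd (h : X → ℝ) (x : X) : ℝ := if h x > 0 then 1 else 0

/-- Constraint decay function `F^π(x) = γ ^ (N^π x)` with `γ ^ ∞ := 0`,
where `N^π x` is the least `t` with `h (xₜ) > 0` along the trajectory. -/
noncomputable def Fcdf (f : X → U → X) (h : X → ℝ) (γ : ℝ) (π : X → U) (x : X) : ℝ :=
  if hx : ∃ t, h (traj f π x t) > 0 then γ ^ Nat.find hx else 0

/-- Feasible region of a policy `π`. -/
def Xfeas (f : X → U → X) (h : X → ℝ) (π : X → U) : Set X :=
  {x | ∀ t, h (traj f π x t) ≤ 0}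

/-- Maximum feasible region. -/
def Xstar (f : X → U → X) (h : X → ℝ) : Set X :=
  {x | ∃ π : X → U, x ∈ Xfeas f h π}

/-- Optimal constraint decay function: infimum of `F^π` over all policies. -/
noncomputable def Fstar (f : X → U → X) (h : X → ℝ) (γ : ℝ) (x : X) : ℝ :=
  ⨅ π : X → U, Fcdf f h γ π x

/-- State-value function of a policy. -/
noncomputable def Vval (f : X → U → X) (r : X → U → ℝ) (γ : ℝ) (π : X → U) (x : X) : ℝ :=
  ∑' t : ℕ, γ ^ t * r (traj f π x t) (π (traj f π x t))

/-- Optimal state-value function: max of `V^π` over policies whose feasible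
region equals the maximum feasible region. -/
noncomputable def Vstar (f : X → U → X) (h : X → ℝ) (r : X → U → ℝ) (γ : ℝ) (x : X) : ℝ :=
  ⨆ π : {π : X → U // Xfeas f h π = Xstar f h}, Vval f r γ π.1 x

open scoped Topology in
/-- Unrolling the one-step inequality gives `∑_{t<n} γ^t a_t + γ^n w_n ≤ w_0`, and `γ^n w_n → 0`
because `w` is bounded. -/
lemma tsum_le_of_step {γ : ℝ} (hγ0 : 0 < γ) (hγ1 : γ < 1) {a w : ℕ → ℝ} {C D : ℝ}
    (ha : ∀ t, |a t| ≤ C) (hw : ∀ t, |w t| ≤ D)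
    (hstep : ∀ t, a t + γ * w (t + 1) ≤ w t) : ∑' t, γ ^ t * a t ≤ w 0 := by
  have hsum : Summable fun t => γ ^ t * a t := by
    refine Summable.of_norm_bounded
      ((summable_geometric_of_lt_one hγ0.le hγ1).mul_right C) fun t => ?_
    rw [Real.norm_eq_abs, abs_mul, abs_of_pos (pow_pos hγ0 t)]
    exact mul_le_mul_of_nonneg_left (ha t) (pow_pos hγ0 t).le
  have hpart : ∀ n, ∑ t ∈ Finset.range n, γ ^ t * a t + γ ^ n * w n ≤ w 0 := by
    intro n
    induction n with
    | zero => simp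
    | succ n ih =>
      rw [Finset.sum_range_succ, pow_succ]
      have := mul_le_mul_of_nonneg_left (hstep n) (pow_pos hγ0 n).le
      linarith
  have hlim : Filter.Tendsto (fun n => γ ^ n * w n) Filter.atTop (𝓝 0) := by
    have h0 : Filter.Tendsto (fun n => γ ^ n * D) Filter.atTop (𝓝 0) := by
      simpa using (tendsto_pow_atTop_nhds_zero_of_lt_one hγ0.le hγ1).mul_const D
    refine squeeze_zero_norm (fun t => ?_) h0
    rw [Real.norm_eq_abs, abs_mul, abs_of_pos (pow_pos hγ0 t)]
    exact mul_le_mul_of_nonneg_left (hw t) (pow_pos hγ0 t).le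
  have := hsum.hasSum.tendsto_sum_nat.add hlim
  rw [add_zero] at this
  exact le_of_tendsto' this hpart

lemma traj_succ' (f : X → U → X) (π : X → U) (x : X) (t : ℕ) :
    traj f π x (t + 1) = traj f π (f x (π x)) t := by
  induction t with
  | zero => rfl
  | succ t ih =>
    show f (traj f π x (t + 1)) (π (traj f π x (t + 1))) = _
    rw [ih]; rfl

lemma step_mem_Xfeas {f : X → U → X} {h : X → ℝ} {π : X → U} {x : X}
    (hx : x ∈ Xfeas f h π) : f x (π x) ∈ Xfeas f h π := fun t => by
  rw [← traj_succ']; exact hx (t + 1)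

lemma exists_step_mem_Xstar {f : X → U → X} {h : X → ℝ} {x : X} (hx : x ∈ Xstar f h) :
    ∃ u, f x u ∈ Xstar f h := by
  obtain ⟨π, hπ⟩ := hx
  exact ⟨π x, π, step_mem_Xfeas hπ⟩

lemma traj_mem_Xstar {f : X → U → X} {h : X → ℝ} {π : X → U}
    (hπ : ∀ x ∈ Xstar f h, f x (π x) ∈ Xstar f h) {x : X} (hx : x ∈ Xstar f h) (t : ℕ) :
    traj f π x t ∈ Xstar f h := by
  induction t with
  | zero => exact hx
  | succ t ih => exact hπ _ ih

/-- `π ∈ Π*` exactly when `π` keeps the maximum feasible region invariant. -/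
lemma Xfeas_eq_Xstar_iff {f : X → U → X} {h : X → ℝ} {π : X → U} :
    Xfeas f h π = Xstar f h ↔ ∀ x ∈ Xstar f h, f x (π x) ∈ Xstar f h := by
  constructor
  · intro e x hx
    rw [← e] at hx ⊢
    exact step_mem_Xfeas hx
  · intro hπ
    refine Set.Subset.antisymm (fun x hx => ⟨π, hx⟩) fun x hx t => ?_
    obtain ⟨π', h'⟩ := traj_mem_Xstar hπ hx t
    exact h' 0

/-- A solution of the feasible Bellman equation dominates `V^π` for every `π ∈ Π*`, with equality
for a greedy policy, which itself lies in `Π*`. -/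
lemma eq_Vstar_of_bellman [Finite X] [Finite U]
    {f : X → U → X} {h : X → ℝ} {r : X → U → ℝ} {γ : ℝ}
    (hγ0 : 0 < γ) (hγ1 : γ < 1) {V : ↥(Xstar f h) → ℝ} [Nonempty U]
    (hV : ∀ x : ↥(Xstar f h),
      V x = ⨆ u : {u : U // f x.1 u ∈ Xstar f h},
        (r x.1 u.1 + γ * V ⟨f x.1 u.1, u.2⟩)) (x : ↥(Xstar f h)) :
    V x = Vstar f h r γ x.1 := by
  obtain ⟨D, hD⟩ : ∃ D, ∀ y, |V y| ≤ D := by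
    obtain ⟨D, hD⟩ := (Set.finite_range fun y => |V y|).bddAbove
    exact ⟨D, fun y => hD ⟨y, rfl⟩⟩
  obtain ⟨C, hC⟩ : ∃ C, ∀ p : X × U, |r p.1 p.2| ≤ C := by
    obtain ⟨C, hC⟩ := (Set.finite_range fun p : X × U => |r p.1 p.2|).bddAbove
    exact ⟨C, fun p => hC ⟨p, rfl⟩⟩
  have hle : ∀ π : X → U, Xfeas f h π = Xstar f h → Vval f r γ π x.1 ≤ V x := by
    intro π hπ
    rw [Xfeas_eq_Xstar_iff] at hπ
    refine tsum_le_of_step hγ0 hγ1 (w := fun t => V ⟨_, traj_mem_Xstar hπ x.2 t⟩)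
      (fun t => hC (_, _)) (fun t => hD _) fun t => ?_
    rw [hV ⟨_, traj_mem_Xstar hπ x.2 t⟩]
    exact le_ciSup (f := fun u : {u : U // f (traj f π x.1 t) u ∈ Xstar f h} =>
      r (traj f π x.1 t) u.1 + γ * V ⟨f (traj f π x.1 t) u.1, u.2⟩)
      (Set.finite_range _).bddAbove ⟨_, hπ _ (traj_mem_Xstar hπ x.2 t)⟩
  have hgreedy : ∀ y, ∃ u, ∀ hy : y ∈ Xstar f h, ∃ hu : f y u ∈ Xstar f h,
      V ⟨y, hy⟩ = r y u + γ * V ⟨f y u, hu⟩ := by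
    intro y
    by_cases hy : y ∈ Xstar f h
    · obtain ⟨u₀, hu₀⟩ := exists_step_mem_Xstar hy
      haveI : Nonempty {u : U // f y u ∈ Xstar f h} := ⟨⟨u₀, hu₀⟩⟩
      obtain ⟨u, hu⟩ := exists_eq_ciSup_of_finite
        (f := fun u : {u : U // f y u ∈ Xstar f h} => r y u.1 + γ * V ⟨f y u.1, u.2⟩)
      exact ⟨u.1, fun _ => ⟨u.2, (hV ⟨y, hy⟩).trans hu.symm⟩⟩
    · exact ⟨Classical.arbitrary U, fun hy' => absurd hy' hy⟩
  choose σ hσ using hgreedy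
  have hσ' : ∀ y ∈ Xstar f h, f y (σ y) ∈ Xstar f h := fun y hy => (hσ y hy).1
  have hge : V x ≤ Vval f r γ σ x.1 := by
    -- The unrolled inequality applied to `-r` and `-V` gives the opposite bound.
    have := tsum_le_of_step hγ0 hγ1
      (a := fun t => -r (traj f σ x.1 t) (σ (traj f σ x.1 t)))
      (w := fun t => -V ⟨_, traj_mem_Xstar hσ' x.2 t⟩) (C := C) (D := D)
      (fun t => by rw [abs_neg]; exact hC (_, _)) (fun t => by rw [abs_neg]; exact hD _)
      (fun t => by
        obtain ⟨hu, e⟩ := hσ _ (traj_mem_Xstar hσ' x.2 t)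
        rw [e]
        simp only [traj]
        linarith)
    simp only [mul_neg, tsum_neg] at this
    exact neg_le_neg_iff.mp this
  have hσfeas := Xfeas_eq_Xstar_iff.mpr hσ'
  haveI : Nonempty {π : X → U // Xfeas f h π = Xstar f h} := ⟨⟨σ, hσfeas⟩⟩
  refine le_antisymm ?_ (ciSup_le fun π => hle π.1 π.2)
  exact hge.trans (le_ciSup (f := fun π : {π : X → U // Xfeas f h π = Xstar f h} =>
    Vval f r γ π.1 x.1) ⟨V x, by rintro _ ⟨π, rfl⟩; exact hle π.1 π.2⟩ ⟨σ, hσfeas⟩)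

/-- The Bellman operator is a `γ`-contraction in the sup norm, so it has a fixed point. -/
lemma exists_bellman [Finite X] [Finite U]
    (f : X → U → X) (h : X → ℝ) (r : X → U → ℝ) {γ : ℝ} (hγ0 : 0 < γ) (hγ1 : γ < 1) :
    ∃ V : ↥(Xstar f h) → ℝ, ∀ x : ↥(Xstar f h),
      V x = ⨆ u : {u : U // f x.1 u ∈ Xstar f h},
        (r x.1 u.1 + γ * V ⟨f x.1 u.1, u.2⟩) := by
  haveI : Fintype ↥(Xstar f h) := Fintype.ofFinite _
  let T : (↥(Xstar f h) → ℝ) → (↥(Xstar f h) → ℝ) := fun V x =>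
    ⨆ u : {u : U // f x.1 u ∈ Xstar f h}, (r x.1 u.1 + γ * V ⟨f x.1 u.1, u.2⟩)
  have hmono : ∀ V W x, T V x ≤ T W x + γ * dist V W := by
    intro V W x
    haveI : Nonempty {u : U // f x.1 u ∈ Xstar f h} :=
      let ⟨u, hu⟩ := exists_step_mem_Xstar x.2
      ⟨⟨u, hu⟩⟩
    refine ciSup_le fun u => ?_
    have h1 : V ⟨f x.1 u.1, u.2⟩ - W ⟨f x.1 u.1, u.2⟩ ≤ dist V W :=
      (le_abs_self _).trans (dist_le_pi_dist V W ⟨f x.1 u.1, u.2⟩)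
    have h2 : r x.1 u.1 + γ * W ⟨f x.1 u.1, u.2⟩ ≤ T W x :=
      le_ciSup (f := fun u : {u : U // f x.1 u ∈ Xstar f h} =>
        r x.1 u.1 + γ * W ⟨f x.1 u.1, u.2⟩) (Set.finite_range _).bddAbove u
    have h3 := mul_le_mul_of_nonneg_left h1 hγ0.le
    linarith
  have hT : ContractingWith ⟨γ, hγ0.le⟩ T := by
    refine ⟨hγ1, LipschitzWith.of_dist_le_mul fun V W => ?_⟩
    refine (dist_pi_le_iff (mul_nonneg hγ0.le dist_nonneg)).mpr fun x => ?_
    rw [Real.dist_eq, abs_sub_le_iff]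
    have h1 := hmono V W x
    have h2 := hmono W V x
    rw [dist_comm W V] at h2
    exact ⟨sub_le_iff_le_add'.mpr h1, sub_le_iff_le_add'.mpr h2⟩
  exact ⟨hT.fixedPoint, fun x => (congrFun hT.fixedPoint_isFixedPt x).symm⟩

/-- Feasible Bellman equation, necessary and sufficient: in
finite spaces with nonempty maximum feasible region, `V : X* → ℝ` satisfies
the feasible Bellman equation iff it is the optimal state-value function. -/
theorem feasible_bellman_iff [Finite X] [Finite U] [Nonempty U]
    (f : X → U → X) (h : X → ℝ) (r : X → U → ℝ) (γ : ℝ)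
    (hγ0 : 0 < γ) (hγ1 : γ < 1) (hXs : (Xstar f h).Nonempty)
    (V : ↥(Xstar f h) → ℝ) :
    (∀ x : ↥(Xstar f h),
      V x = ⨆ u : {u : U // f x.1 u ∈ Xstar f h},
        (r x.1 u.1 + γ * V ⟨f x.1 u.1, u.2⟩)) ↔
      V = fun x => Vstar f h r γ x.1 := by
  constructor
  · exact fun hV => funext (eq_Vstar_of_bellman hγ0 hγ1 hV)
  · rintro rfl
    obtain ⟨W, hW⟩ := exists_bellman f h r hγ0 hγ1
    have e : W = fun x => Vstar f h r γ x.1 := funext (eq_Vstar_of_bellman hγ0 hγ1 hW)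
    exact e ▸ hW
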